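/- Let m ≥ 2. For any nontrivial vector v ∈ ℤ^{2m}, there exist integers a and λ and an index i with 1 < i < 2m such that v is Hurwitz equivalent to the vector (a,…,a, a+λd(v), a+d(v),…,a+d(v)), whose first i−1 entries equal a, whose i-th entry equals a + λ·d(v), and whose last 2m−i entries equal a + d(v). -/

import Mathlib

/-- The alternating sum `Δ(v) = Σ (−1)^{i−1} v_i` (0-indexed: `Σ (−1)^i v_i`). -/
def altSum {n : ℕ} (v : Fin n → ℤ) : ℤ := ∑ i : Fin n, (-1 : ℤ) ^ (i : ℕ) * v i

/-- A vector is trivial if all its entries are equal. -/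
def IsTrivialVec {n : ℕ} (v : Fin n → ℤ) : Prop := ∀ i j, v i = v j

/-- `d(v)`: the (nonnegative) greatest common divisor of all differences of entries. -/
def dval {n : ℕ} (v : Fin n → ℤ) : ℕ :=
  (Finset.univ : Finset (Fin n × Fin n)).gcd fun p => (v p.1 - v p.2).natAbs

/-- `k(v)`: the 2-adic valuation of `d(v)`. -/
def kval {n : ℕ} (v : Fin n → ℤ) : ℕ := padicValNat 2 (dval v)

/-- The multiset of residues of the entries of `v` modulo `2d`. -/
def MresMod {n : ℕ} (v : Fin n → ℤ) (d : ℕ) : Multiset ℤ :=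
  (Finset.univ.val : Multiset (Fin n)).map fun i => v i % (2 * (d : ℤ))

/-- `M(v)`: the multiset of residues of the entries of `v` modulo `2d(v)`. -/
def Mres {n : ℕ} (v : Fin n → ℤ) : Multiset ℤ := MresMod v (dval v)

/-- `v'` is obtained from `v` by an elementary Hurwitz move `σ_i`:
`(v_i, v_{i+1}) ↦ (v_{i+1}, 2v_{i+1} − v_i)`, all other entries unchanged. -/
def IsHurwitzMove {n : ℕ} (v v' : Fin n → ℤ) : Prop :=
  ∃ (i : ℕ) (hi : i + 1 < n),
    v' ⟨i, Nat.lt_of_succ_lt hi⟩ = v ⟨i + 1, hi⟩ ∧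
    v' ⟨i + 1, hi⟩ = 2 * v ⟨i + 1, hi⟩ - v ⟨i, Nat.lt_of_succ_lt hi⟩ ∧
    ∀ j : Fin n, (j : ℕ) ≠ i → (j : ℕ) ≠ i + 1 → v' j = v j

/-- Hurwitz equivalence: a finite sequence of elementary Hurwitz moves and inverses. -/
def HurwitzEquiv {n : ℕ} (v w : Fin n → ℤ) : Prop :=
  Relation.ReflTransGen (fun a b => IsHurwitzMove a b ∨ IsHurwitzMove b a) v w

/-!
All moves preserve the subgroup generated by the differences of entries, which is generated by
`d(v)`. Euclid's algorithm on the consecutive differences of a triple brings it to the shape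
`(c, c + g, c + g)`; sweeping this through the vector from right to left produces two adjacent
entries `b, b + e` that generate the whole difference subgroup, so that `e = d(v)`.

An adjacent pair of equal entries `(c, c)` commutes past every other entry, and can be reflected in
any other entry. Hence, as long as both `a` and `a + e` occur elsewhere, `(c, c)` with
`c ≡ a (mod e)` can be turned into `(a, a)` or `(a + e, a + e)` according to the parity of
`(c - a) / e`. Splitting off such pairs from the vector reduces the claim to length three or four.
-/

section ListHurwitz

variable {G : Type*} [AddCommGroup G]

/-- An elementary Hurwitz move on a list with entries in an abelian group. Lists make it
possible to apply moves inside a larger vector by concatenation. -/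
inductive ListHurwitzMove : List G → List G → Prop
  | mk (L R : List G) (x y : G) :
      ListHurwitzMove (L ++ x :: y :: R) (L ++ y :: (2 • y - x) :: R)

/-- Hurwitz equivalence of lists: the equivalence relation generated by the elementary moves,
so that inverse moves need no constructor of their own. -/
def ListHurwitzEquiv : List G → List G → Prop :=
  Relation.EqvGen ListHurwitzMove

local infix:50 " ≈ₕ " => ListHurwitzEquiv

/-- The subgroup generated by all differences of entries of `l`, the invariant that determines
`d(v)`: for integer entries it is generated by the greatest common divisor of the differences. -/
def diffSubgroup (l : List G) : AddSubgroup G :=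
  AddSubgroup.closure {g | ∃ x ∈ l, ∃ y ∈ l, x - y = g}

theorem sub_mem_diffSubgroup {l : List G} {x y : G} (hx : x ∈ l) (hy : y ∈ l) :
    x - y ∈ diffSubgroup l :=
  AddSubgroup.subset_closure ⟨x, hx, y, hy, rfl⟩

theorem diffSubgroup_le_iff {l : List G} {H : AddSubgroup G} :
    diffSubgroup l ≤ H ↔ ∀ x ∈ l, ∀ y ∈ l, x - y ∈ H := by
  rw [diffSubgroup, AddSubgroup.closure_le]
  constructor
  · exact fun h x hx y hy ↦ h ⟨x, hx, y, hy, rfl⟩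
  · rintro h _ ⟨x, hx, y, hy, rfl⟩
    exact h x hx y hy

theorem diffSubgroup_le_iff_of_mem {l : List G} {H : AddSubgroup G} {c : G} (hc : c ∈ l) :
    diffSubgroup l ≤ H ↔ ∀ x ∈ l, x - c ∈ H := by
  rw [diffSubgroup_le_iff]
  refine ⟨fun h x hx ↦ h x hx c hc, fun h x hx y hy ↦ ?_⟩
  simpa only [sub_sub_sub_cancel_right] using H.sub_mem (h x hx) (h y hy)

theorem diffSubgroup_mono {l l' : List G} (h : l ⊆ l') : diffSubgroup l ≤ diffSubgroup l' :=
  diffSubgroup_le_iff.2 fun _ hx _ hy ↦ sub_mem_diffSubgroup (h hx) (h hy)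

theorem diffSubgroup_cons {l : List G} {c : G} (hc : c ∈ l) (x : G) :
    diffSubgroup (x :: l) = AddSubgroup.zmultiples (x - c) ⊔ diffSubgroup l := by
  refine eq_of_forall_ge_iff fun H ↦ ?_
  rw [sup_le_iff, AddSubgroup.zmultiples_le, diffSubgroup_le_iff_of_mem hc,
    diffSubgroup_le_iff_of_mem (List.mem_cons_of_mem x hc), List.forall_mem_cons]

theorem diffSubgroup_pair (b e : G) : diffSubgroup [b, b + e] = AddSubgroup.zmultiples e := by
  refine eq_of_forall_ge_iff fun H ↦ ?_
  simp [diffSubgroup_le_iff_of_mem (List.mem_cons_self (a := b))]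

theorem diffSubgroup_cons_pair (b e : G) :
    diffSubgroup [b, b + e, b + e] = AddSubgroup.zmultiples e := by
  refine eq_of_forall_ge_iff fun H ↦ ?_
  simp [diffSubgroup_le_iff_of_mem (List.mem_cons_self (a := b))]

theorem ListHurwitzMove.diffSubgroup_eq {l l' : List G} (h : ListHurwitzMove l l') :
    diffSubgroup l = diffSubgroup l' := by
  obtain ⟨L, R, x, y⟩ := h
  refine eq_of_forall_ge_iff fun H ↦ ?_
  have reflected_mem : 2 • y - x - y ∈ H ↔ x - y ∈ H := by
    have neg_sub_eq : 2 • y - x - y = -(x - y) := by abel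
    rw [neg_sub_eq, H.neg_mem_iff]
  rw [diffSubgroup_le_iff_of_mem (c := y) (by simp),
    diffSubgroup_le_iff_of_mem (c := y) (by simp)]
  simp only [List.forall_mem_append, List.forall_mem_cons, reflected_mem]
  tauto

namespace ListHurwitzEquiv

theorem refl (l : List G) : l ≈ₕ l := Relation.EqvGen.refl l

theorem symm {l l' : List G} (h : l ≈ₕ l') : l' ≈ₕ l := Relation.EqvGen.symm _ _ h

theorem trans {l₁ l₂ l₃ : List G} (h : l₁ ≈ₕ l₂) (h' : l₂ ≈ₕ l₃) : l₁ ≈ₕ l₃ :=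
  Relation.EqvGen.trans _ _ _ h h'

instance : Trans (ListHurwitzEquiv (G := G)) ListHurwitzEquiv ListHurwitzEquiv := ⟨trans⟩

theorem append_append (A B : List G) {l l' : List G} (h : l ≈ₕ l') :
    A ++ (l ++ B) ≈ₕ A ++ (l' ++ B) := by
  induction h with
  | rel _ _ h =>
    obtain ⟨L, R, x, y⟩ := h
    refine Relation.EqvGen.rel _ _ ?_
    simpa only [List.append_assoc, List.cons_append] using
      ListHurwitzMove.mk (A ++ L) (R ++ B) x y
  | refl => exact refl _
  | symm _ _ _ ih => exact ih.symm
  | trans _ _ _ _ _ ih₁ ih₂ => exact ih₁.trans ih₂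

theorem append_left (A : List G) {l l' : List G} (h : l ≈ₕ l') : A ++ l ≈ₕ A ++ l' := by
  simpa only [List.append_nil] using h.append_append A []

theorem append_right (B : List G) {l l' : List G} (h : l ≈ₕ l') : l ++ B ≈ₕ l' ++ B :=
  h.append_append [] B

theorem cons (x : G) {l l' : List G} (h : l ≈ₕ l') : x :: l ≈ₕ x :: l' :=
  h.append_left [x]

theorem diffSubgroup_eq {l l' : List G} (h : l ≈ₕ l') : diffSubgroup l = diffSubgroup l' := by
  induction h with
  | rel _ _ h => exact h.diffSubgroup_eq
  | refl => rfl
  | symm _ _ _ ih => exact ih.symm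
  | trans _ _ _ _ _ ih₁ ih₂ => exact ih₁.trans ih₂

theorem length_eq {l l' : List G} (h : l ≈ₕ l') : l.length = l'.length := by
  induction h with
  | rel _ _ h => obtain ⟨L, R, x, y⟩ := h; simp
  | refl => rfl
  | symm _ _ _ ih => exact ih.symm
  | trans _ _ _ _ _ ih₁ ih₂ => exact ih₁.trans ih₂

theorem move (x y : G) (R : List G) : x :: y :: R ≈ₕ y :: (2 • y - x) :: R :=
  Relation.EqvGen.rel _ _ (ListHurwitzMove.mk [] R x y)

theorem slide (b e : G) (R : List G) (k : ℤ) :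
    b :: (b + e) :: R ≈ₕ (b + k • e) :: (b + k • e + e) :: R := by
  have slide_one (c : G) : c :: (c + e) :: R ≈ₕ (c + e) :: (c + e + e) :: R := by
    have reflection : 2 • (c + e) - c = c + e + e := by abel
    simpa only [reflection] using move c (c + e) R
  induction k with
  | zero => simpa only [zero_smul, add_zero] using refl _
  | succ k ih =>
    have next : b + (k + 1 : ℤ) • e = b + (k : ℤ) • e + e := by module
    simpa only [next] using ih.trans (slide_one _)
  | pred k ih =>
    have next : b + (-k : ℤ) • e = b + (-k - 1 : ℤ) • e + e := by module
    rw [next] at ih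
    exact ih.trans (slide_one _).symm

theorem slide_to {b e z : G} (hz : z - b ∈ AddSubgroup.zmultiples e) (R : List G) :
    b :: (b + e) :: R ≈ₕ (z - e) :: z :: R := by
  obtain ⟨k, hk⟩ := AddSubgroup.mem_zmultiples_iff.1 hz
  have hfirst : b + (k - 1) • e = z - e := by
    rw [sub_smul, hk]
    module
  simpa only [hfirst, sub_add_cancel] using slide b e R (k - 1)

-- On consecutive differences this is `(p, q) ↦ (q, -p)`, the swap in Euclid's algorithm.
theorem triple_rotate (x p q : G) (R : List G) :
    x :: (x + p) :: (x + p + q) :: R ≈ₕ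
      (x + p + q) :: (x + p + q + q) :: (x + p + q + q - p) :: R := by
  have half_twist := ((move x (x + p) ((x + p + q) :: R)).trans
    ((move _ (x + p + q) R).cons _)).trans (move _ _ _)
  have second : 2 • (x + p + q) - (x + p) = x + p + q + q := by abel
  have third : 2 • (x + p + q) - (2 • (x + p) - x) = x + p + q + q - p := by abel
  simpa only [second, third] using half_twist

theorem pair_cons (c z : G) (R : List G) : c :: c :: z :: R ≈ₕ z :: c :: c :: R := by
  have h := (move z c (c :: R)).trans ((move (2 • c - z) c R).cons c)
  rw [sub_sub_cancel] at h
  exact h.symm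

theorem pair_append (c : G) (M R : List G) : c :: c :: (M ++ R) ≈ₕ M ++ c :: c :: R := by
  induction M with
  | nil => exact refl _
  | cons z M ih => exact (pair_cons c z _).trans (ih.cons z)

theorem pair_reflect_cons (c z : G) (R : List G) :
    c :: c :: z :: R ≈ₕ (2 • z - c) :: (2 • z - c) :: z :: R :=
  calc
    c :: c :: z :: R ≈ₕ c :: z :: (2 • z - c) :: R := (move c z R).cons c
    _ ≈ₕ z :: (2 • z - c) :: (2 • z - c) :: R := move c z _
    _ ≈ₕ (2 • z - c) :: (2 • z - c) :: z :: R := (pair_cons _ z R).symm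

theorem cons_pair_neg (c g : G) (R : List G) :
    c :: (c + g) :: (c + g) :: R ≈ₕ c :: (c + -g) :: (c + -g) :: R := by
  have reflection : 2 • c - (c + g) = c + -g := by abel
  calc
    c :: (c + g) :: (c + g) :: R ≈ₕ (c + g) :: (c + g) :: c :: R := (pair_cons _ c R).symm
    _ ≈ₕ (c + -g) :: (c + -g) :: c :: R := by
      simpa only [reflection] using pair_reflect_cons (c + g) c R
    _ ≈ₕ c :: (c + -g) :: (c + -g) :: R := pair_cons _ c R

theorem pair_reflect (c : G) {z : G} {M : List G} (hz : z ∈ M) :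
    c :: c :: M ≈ₕ (2 • z - c) :: (2 • z - c) :: M := by
  obtain ⟨A, B, rfl⟩ := List.append_of_mem hz
  calc
    c :: c :: (A ++ z :: B) ≈ₕ A ++ c :: c :: z :: B := pair_append c A _
    _ ≈ₕ A ++ (2 • z - c) :: (2 • z - c) :: z :: B := (pair_reflect_cons c z B).append_left A
    _ ≈ₕ (2 • z - c) :: (2 • z - c) :: (A ++ z :: B) := (pair_append _ A _).symm

theorem pair_translate (c : G) {z w : G} {M : List G} (hz : z ∈ M) (hw : w ∈ M) (k : ℤ) :
    c :: c :: M ≈ₕ (c + (2 * k) • (z - w)) :: (c + (2 * k) • (z - w)) :: M := by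
  have translate_one (c : G) :
      c :: c :: M ≈ₕ (c + 2 • (z - w)) :: (c + 2 • (z - w)) :: M := by
    have two_reflections : 2 • z - (2 • w - c) = c + 2 • (z - w) := by abel
    simpa only [two_reflections] using
      (pair_reflect c hw).trans (pair_reflect (2 • w - c) hz)
  induction k with
  | zero => simpa only [mul_zero, zero_smul, add_zero] using refl _
  | succ k ih =>
    have next : c + (2 * (k + 1) : ℤ) • (z - w) = c + (2 * k : ℤ) • (z - w) + 2 • (z - w) := by
      module
    simpa only [next] using ih.trans (translate_one _)
  | pred k ih =>
    have next : c + (2 * -k : ℤ) • (z - w) =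
        c + (2 * (-k - 1) : ℤ) • (z - w) + 2 • (z - w) := by
      module
    rw [next] at ih
    exact ih.trans (translate_one _).symm

end ListHurwitzEquiv

/-- The list `(a, …, a, s, a + e, …, a + e)`. There are `i + 1` entries `a` and `j + 1` entries
`a + e`, so that both blocks are nonempty. -/
def normalForm (a s e : G) (i j : ℕ) : List G :=
  List.replicate (i + 1) a ++ s :: List.replicate (j + 1) (a + e)

theorem normalForm_getD (a s e x : G) {i j k : ℕ} (hk : k < (normalForm a s e i j).length) :
    (normalForm a s e i j).getD k x = if k < i + 1 then a else if k = i + 1 then s else a + e := by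
  simp only [normalForm] at hk ⊢
  grind

theorem exists_pair_cons_normalForm_equiv {a e c : G}
    (hc : c - a ∈ AddSubgroup.zmultiples e) (s : G) (i j : ℕ) :
    ∃ i' j', c :: c :: normalForm a s e i j ≈ₕ normalForm a s e i' j' := by
  obtain ⟨k, hk⟩ := AddSubgroup.mem_zmultiples_iff.1 hc
  obtain rfl : c = a + k • e := by rw [hk, add_sub_cancel]
  have translate (c : G) (n : ℤ) : c :: c :: normalForm a s e i j ≈ₕ
      (c + (2 * n) • e) :: (c + (2 * n) • e) :: normalForm a s e i j := by
    simpa only [add_sub_cancel_left] using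
      ListHurwitzEquiv.pair_translate c (z := a + e) (w := a) (M := normalForm a s e i j)
        (by simp [normalForm]) (by simp [normalForm]) n
  obtain ⟨n, rfl | rfl⟩ := k.even_or_odd'
  · exact ⟨i + 2, j, (translate a n).symm⟩
  · have odd_translate : a + (2 * n + 1) • e = a + e + (2 * n) • e := by module
    have pair_to_right : (a + e) :: (a + e) :: normalForm a s e i j ≈ₕ
        normalForm a s e i (j + 2) := by
      simpa only [normalForm, List.append_assoc, List.singleton_append, List.replicate_succ] using
        ListHurwitzEquiv.pair_append (a + e) (List.replicate (i + 1) a ++ [s])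
          (List.replicate (j + 1) (a + e))
    rw [odd_translate]
    exact ⟨i, j + 2, (translate (a + e) n).symm.trans pair_to_right⟩

theorem exists_triple_equiv_pair (x p q : ℤ) :
    ∃ c g : ℤ, [x, x + p, x + p + q] ≈ₕ [c, c + g, c + g] := by
  by_cases hq : q = 0
  · exact ⟨x, p, by simpa only [hq, add_zero] using ListHurwitzEquiv.refl _⟩
  · obtain ⟨c, g, h⟩ := exists_triple_equiv_pair (x + p % q + q) q (-(p % q))
    refine ⟨c, g, ?_⟩
    have reduce : [x, x + p, x + p + q] ≈ₕ [x, x + p % q, x + p % q + q] := by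
      have remainder : x + p + -(p / q) • q = x + p % q := by
        rw [Int.emod_def, smul_eq_mul]
        ring
      simpa only [remainder] using (ListHurwitzEquiv.slide (x + p) q [] (-(p / q))).cons x
    exact (reduce.trans (ListHurwitzEquiv.triple_rotate x (p % q) q [])).trans h
termination_by q.natAbs
decreasing_by
  have := Int.emod_nonneg p hq
  have := Int.emod_lt p hq
  omega

theorem exists_triple_equiv_pair_nonneg (x y z : ℤ) :
    ∃ c g : ℤ, 0 ≤ g ∧ [x, y, z] ≈ₕ [c, c + g, c + g] := by
  obtain ⟨c, g, h⟩ := exists_triple_equiv_pair x (y - x) (z - y)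
  simp only [add_sub_cancel] at h
  rcases le_total 0 g with hg | hg
  · exact ⟨c, g, hg, h⟩
  · exact ⟨c, -g, neg_nonneg.2 hg, h.trans (ListHurwitzEquiv.cons_pair_neg c g [])⟩

theorem exists_equiv_cons_add_cons (l : List ℤ) (hl : 3 ≤ l.length) :
    ∃ (b e : ℤ) (R : List ℤ), 0 ≤ e ∧ l ≈ₕ b :: (b + e) :: R ∧
      diffSubgroup l = AddSubgroup.zmultiples e := by
  match l, hl with
  | [x, y, z], _ =>
    obtain ⟨b, e, he, h⟩ := exists_triple_equiv_pair_nonneg x y z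
    refine ⟨b, e, [b + e], he, h, ?_⟩
    rw [h.diffSubgroup_eq, diffSubgroup_cons_pair]
  | x :: y :: z :: w :: l, _ =>
    obtain ⟨b, e, R, -, hR, hdiff⟩ := exists_equiv_cons_add_cons (y :: z :: w :: l) (by simp)
    obtain ⟨c, g, hg, h⟩ := exists_triple_equiv_pair_nonneg x b (b + e)
    refine ⟨c, g, (c + g) :: R, hg, (hR.cons x).trans (h.append_right R), ?_⟩
    rw [(hR.cons x).diffSubgroup_eq, diffSubgroup_cons List.mem_cons_self, ← hR.diffSubgroup_eq,
      hdiff, ← diffSubgroup_pair b e, ← diffSubgroup_cons List.mem_cons_self, h.diffSubgroup_eq,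
      diffSubgroup_cons_pair]

theorem exists_equiv_pair_cons (A : List ℤ) (x y z : ℤ) (R : List ℤ) :
    ∃ c d : ℤ, A ++ x :: y :: z :: R ≈ₕ d :: d :: (A ++ c :: R) := by
  obtain ⟨c, g, -, h⟩ := exists_triple_equiv_pair_nonneg x y z
  refine ⟨c, c + g, ?_⟩
  calc
    A ++ x :: y :: z :: R
    _ ≈ₕ A ++ c :: (c + g) :: (c + g) :: R := h.append_append A R
    _ ≈ₕ A ++ (c + g) :: (c + g) :: c :: R :=
      (ListHurwitzEquiv.pair_cons (c + g) c R).symm.append_left A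
    _ ≈ₕ (c + g) :: (c + g) :: (A ++ c :: R) := (ListHurwitzEquiv.pair_append (c + g) A _).symm

theorem exists_equiv_normalForm (b e : ℤ) (R : List ℤ) (hR : R ≠ [])
    (hdiff : diffSubgroup (b :: (b + e) :: R) ≤ AddSubgroup.zmultiples e) :
    ∃ a s i j, b :: (b + e) :: R ≈ₕ normalForm a s e i j := by
  have slide_to {z : ℤ} (hz : z ∈ R) : b :: (b + e) :: R ≈ₕ (z - e) :: z :: R :=
    ListHurwitzEquiv.slide_to (hdiff (sub_mem_diffSubgroup (by simp [hz]) (by simp))) R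
  match R with
  | [z] => exact ⟨z - e, z, 0, 0, by simpa [normalForm] using slide_to (z := z) (by simp)⟩
  | [y, z] =>
    have h : [b, b + e, y, z] ≈ₕ [y - e, z, y, y] :=
      (slide_to (by simp)).trans ((ListHurwitzEquiv.pair_cons y z []).cons (y - e))
    exact ⟨y - e, z, 0, 1, by simpa [normalForm, List.replicate_succ] using h⟩
  | x :: y :: z :: R =>
    obtain ⟨c, d, hsplit⟩ := exists_equiv_pair_cons [b, b + e] x y z R
    replace hdiff := hsplit.diffSubgroup_eq.symm.trans_le hdiff
    obtain ⟨a, s, i, j, hrest⟩ := exists_equiv_normalForm b e (c :: R) (by simp)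
      ((diffSubgroup_mono (by simp)).trans hdiff)
    have hfront : d :: d :: b :: (b + e) :: c :: R ≈ₕ d :: d :: normalForm a s e i j :=
      (hrest.cons d).cons d
    have hd : d - a ∈ AddSubgroup.zmultiples e :=
      hdiff (hfront.diffSubgroup_eq ▸
        sub_mem_diffSubgroup (by simp) (by simp [normalForm]))
    obtain ⟨i', j', hpair⟩ := exists_pair_cons_normalForm_equiv hd s i j
    exact ⟨a, s, i', j', (hsplit.trans hfront).trans hpair⟩
termination_by R.length

theorem dvd_dval_iff {n : ℕ} (v : Fin n → ℤ) (k : ℤ) :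
    k ∣ dval v ↔ ∀ i j, k ∣ v i - v j := by
  rw [← Int.natAbs_dvd, Int.natCast_dvd_natCast, dval, Finset.dvd_gcd_iff]
  simp [Int.natAbs_dvd_natAbs]

theorem diffSubgroup_ofFn {n : ℕ} (v : Fin n → ℤ) :
    diffSubgroup (List.ofFn v) = AddSubgroup.zmultiples (dval v : ℤ) := by
  refine eq_of_forall_ge_iff fun H ↦ ?_
  obtain ⟨k, rfl⟩ := Int.subgroup_cyclic H
  simp only [← AddSubgroup.zmultiples_eq_closure, AddSubgroup.zmultiples_le,
    Int.mem_zmultiples_iff, diffSubgroup_le_iff, dvd_dval_iff, List.forall_mem_ofFn_iff]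

theorem ListHurwitzMove.isHurwitzMove {l l' : List ℤ} (h : ListHurwitzMove l l') :
    IsHurwitzMove (fun j : Fin l.length ↦ l.getD j 0) (fun j : Fin l.length ↦ l'.getD j 0) := by
  obtain ⟨L, R, x, y⟩ := h
  refine ⟨L.length, by simp, by simp, by simp, fun j hj hj' ↦ ?_⟩
  grind

theorem ListHurwitzEquiv.hurwitzEquiv {l l' : List ℤ} (h : l ≈ₕ l') {n : ℕ} (hl : l.length = n) :
    HurwitzEquiv (fun j : Fin n ↦ l.getD j 0) (fun j : Fin n ↦ l'.getD j 0) := by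
  induction h with
  | rel _ _ h => subst hl; exact Relation.ReflTransGen.single (Or.inl h.isHurwitzMove)
  | refl => exact Relation.ReflTransGen.refl
  | symm _ _ h ih =>
    have : Std.Symm fun a b : Fin n → ℤ ↦ IsHurwitzMove a b ∨ IsHurwitzMove b a :=
      ⟨fun _ _ ↦ Or.symm⟩
    exact Relation.ReflTransGen.stdSymm.symm _ _ (ih ((length_eq h).trans hl))
  | trans _ _ _ h _ ih₁ ih₂ => exact (ih₁ hl).trans (ih₂ ((length_eq h).symm.trans hl))

theorem exists_equiv_normalForm_dval {n : ℕ} (hn : 3 ≤ n) (v : Fin n → ℤ) :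
    ∃ a s i j, List.ofFn v ≈ₕ normalForm a s (dval v : ℤ) i j := by
  obtain ⟨b, e, R, he, hpair, hdiff⟩ := exists_equiv_cons_add_cons (List.ofFn v) (by simpa)
  obtain rfl : e = dval v := by
    have hindex := congrArg AddSubgroup.index (hdiff.symm.trans (diffSubgroup_ofFn v))
    simp only [Int.index_zmultiples, Int.natAbs_natCast] at hindex
    omega
  have hR : R ≠ [] := by
    rintro rfl
    have hlen := hpair.length_eq
    simp only [List.length_ofFn, List.length_cons, List.length_nil] at hlen
    omega
  obtain ⟨a, s, i, j, hform⟩ :=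
    exists_equiv_normalForm b _ R hR (hpair.diffSubgroup_eq ▸ hdiff.le)
  exact ⟨a, s, i, j, hpair.trans hform⟩

end ListHurwitz

theorem stmt_3_general (n : ℕ) (hn : 3 ≤ n) (v : Fin n → ℤ) :
    ∃ (a lam : ℤ) (t : ℕ), 0 < t ∧ t + 1 < n ∧
      HurwitzEquiv v (fun j ↦
        if (j : ℕ) < t then a
        else if (j : ℕ) = t then a + lam * (dval v : ℤ)
        else a + (dval v : ℤ)) := by
  obtain ⟨a, s, i, j, hequiv⟩ := exists_equiv_normalForm_dval hn v
  have hs : s - a ∈ AddSubgroup.zmultiples (dval v : ℤ) := by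
    rw [← diffSubgroup_ofFn, hequiv.diffSubgroup_eq]
    exact sub_mem_diffSubgroup (by simp [normalForm]) (by simp [normalForm])
  obtain ⟨lam, hlam⟩ := AddSubgroup.mem_zmultiples_iff.1 hs
  obtain rfl : s = a + lam * dval v := by rw [← smul_eq_mul, hlam, add_sub_cancel]
  have hlen : (normalForm a (a + lam * dval v) (dval v : ℤ) i j).length = n := by
    simpa only [List.length_ofFn] using hequiv.length_eq.symm
  have hsum : i + 1 + (j + 1 + 1) = n := by simpa [normalForm] using hlen
  refine ⟨a, lam, i + 1, by omega, by omega, ?_⟩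
  convert hequiv.hurwitzEquiv List.length_ofFn using 2 with k k
  · simp
  · exact (normalForm_getD _ _ _ _ (k.isLt.trans_eq hlen.symm)).symm

/-- Normal form under the Hurwitz action: any nontrivial vector in ℤ^{2m} (m ≥ 2) is
Hurwitz equivalent to (a,…,a, a+λd(v), a+d(v),…,a+d(v)) with the special entry at
some position t with 0 < t < 2m−1 (0-indexed; i.e. 1 < i < 2m, 1-indexed). -/
theorem stmt_3 (m : ℕ) (hm : 2 ≤ m) (v : Fin (2 * m) → ℤ)
    (hv : ¬ IsTrivialVec v) :
    ∃ (a lam : ℤ) (t : ℕ), 0 < t ∧ t + 1 < 2 * m ∧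
      HurwitzEquiv v (fun j =>
        if (j : ℕ) < t then a
        else if (j : ℕ) = t then a + lam * (dval v : ℤ)
        else a + (dval v : ℤ)) := by
  exact stmt_3_general (2 * m) (by omega) v
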